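/- arXiv:1801.05388 — 9 statements merged into one kernel-verified Lean document; each statement's English description precedes it below -/
import Mathlib

section
/- (Increasing preference property) For all real numbers λ > λ' > 0 and all natural numbers w > w' ≥ 0, U(λ, w) − U(λ, w') > U(λ', w) − U(λ', w'); that is, a fixed quality improvement from w' to w channels is strictly more valuable to a higher type than to a lower type. -/
/-!
Each Poisson tail `P(X_lam ≥ k + 1)` is strictly increasing in the mean `lam ≥ 0`: its derivative
telescopes to the Poisson mass `exp (-lam) * lam ^ k / k!`, which is positive for `lam > 0`. The
increment `utility lam w - utility lam w'` is the sum of the tails with thresholds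
`w' < k ≤ w`, hence a nonempty sum of strictly increasing functions.
-/

/-- Tail probability of a Poisson random variable with mean `lam` at threshold `k`. -/
noncomputable def poissonTail (lam : ℝ) (k : ℕ) : ℝ :=
  1 - Real.exp (-lam) * ∑ i ∈ Finset.range k, lam ^ i / (Nat.factorial i : ℝ)

/-- Utility of a `lam`-type UAV obtaining `w` channels: `U(lam, w) = ∑_{k=1}^{w} P(X_lam ≥ k)`. -/
noncomputable def utility (lam : ℝ) (w : ℕ) : ℝ :=
  ∑ k ∈ Finset.Icc 1 w, poissonTail lam k

/-- The derivative of the tail in the mean is the mass just below the threshold. -/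
theorem hasDerivAt_poissonTail_succ (k : ℕ) (x : ℝ) :
    HasDerivAt (fun y => poissonTail y (k + 1))
      (Real.exp (-x) * (x ^ k / (Nat.factorial k : ℝ))) x := by
  have hexp : HasDerivAt (fun y : ℝ => Real.exp (-y)) (-Real.exp (-x)) x := by
    simpa using (hasDerivAt_neg x).exp
  induction k with
  | zero => simpa [poissonTail] using hexp.const_sub 1
  | succ k ih =>
    have hstep : (fun y => poissonTail y (k + 1 + 1)) = fun y => poissonTail y (k + 1) -
        Real.exp (-y) * (y ^ (k + 1) / (Nat.factorial (k + 1) : ℝ)) := by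
      funext y
      simp only [poissonTail]
      rw [Finset.sum_range_succ _ (k + 1)]
      ring
    rw [hstep]
    have hk : (Nat.factorial k : ℝ) ≠ 0 := by positivity
    have hk1 : (k : ℝ) + 1 ≠ 0 := by positivity
    refine (ih.sub (hexp.mul ((hasDerivAt_pow (k + 1) x).div_const
      (Nat.factorial (k + 1) : ℝ)))).congr_deriv ?_
    rw [Nat.factorial_succ]
    push_cast
    field_simp
    ring

theorem strictMonoOn_poissonTail_succ (k : ℕ) :
    StrictMonoOn (fun y => poissonTail y (k + 1)) (Set.Ici 0) := by
  refine strictMonoOn_of_deriv_pos (convex_Ici 0)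
    (fun x _ => (hasDerivAt_poissonTail_succ k x).continuousAt.continuousWithinAt) ?_
  intro x hx
  rw [interior_Ici, Set.mem_Ioi] at hx
  rw [(hasDerivAt_poissonTail_succ k x).deriv]
  positivity

theorem utility_succ (lam : ℝ) (n : ℕ) :
    utility lam (n + 1) = utility lam n + poissonTail lam (n + 1) :=
  Finset.sum_Icc_succ_top (Nat.le_add_left 1 n) _

theorem increasing_preference (lam lam' : ℝ) (hlam' : 0 < lam') (hll : lam' < lam)
    (w w' : ℕ) (hww : w' < w) :
    utility lam' w - utility lam' w' < utility lam w - utility lam w' := by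
  have hmono : StrictMono fun n => utility lam n - utility lam' n := by
    refine strictMono_nat_of_lt_succ fun n => ?_
    have htail : poissonTail lam' (n + 1) < poissonTail lam (n + 1) :=
      strictMonoOn_poissonTail_succ n hlam'.le (hlam'.trans hll).le hll
    rw [utility_succ, utility_succ]
    linarith
  have hdiff : utility lam w' - utility lam' w' < utility lam w - utility lam' w := hmono hww
  linarith
end

section
/- In any feasible contract, prices are strictly monotone in qualities: for all indices i, j ∈ {1,…,T}, w_i < w_j if and only if p_i < p_j. -/
/-- A contract `(w, p)` for `T` types `lam 1 < ⋯ < lam T` is feasible if prices are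
nonnegative, and the IC and IR constraints hold. -/
def Feasible (T : ℕ) (lam : ℕ → ℝ) (w : ℕ → ℕ) (p : ℕ → ℝ) : Prop :=
  (∀ t, 1 ≤ t → t ≤ T → 0 ≤ p t) ∧
  (∀ t s, 1 ≤ t → t ≤ T → 1 ≤ s → s ≤ T → s ≠ t →
    utility (lam t) (w t) - p t ≥ utility (lam t) (w s) - p s) ∧
  (∀ t, 1 ≤ t → t ≤ T → utility (lam t) (w t) - p t ≥ 0)

theorem poissonTail_pos {lam : ℝ} (h : 0 < lam) (k : ℕ) : 0 < poissonTail lam k := by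
  -- The partial sum with one more term is at most `exp lam`, and that extra term is positive.
  have h1 := Real.sum_le_exp_of_nonneg h.le (k + 1)
  rw [Finset.sum_range_succ] at h1
  have h2 : 0 < lam ^ k / (Nat.factorial k : ℝ) := by positivity
  have h3 : ∑ i ∈ Finset.range k, lam ^ i / (Nat.factorial i : ℝ) < Real.exp lam := by linarith
  have h4 := mul_lt_mul_of_pos_left h3 (Real.exp_pos (-lam))
  rw [← Real.exp_add, neg_add_cancel, Real.exp_zero] at h4
  unfold poissonTail
  linarith

theorem utility_strictMono {lam : ℝ} (h : 0 < lam) : StrictMono (utility lam) := by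
  refine strictMono_nat_of_lt_succ fun n => ?_
  unfold utility
  rw [Finset.sum_Icc_succ_top (by omega)]
  linarith [poissonTail_pos h (n + 1)]

theorem feasible_prices_monotone_in_qualities (T : ℕ) (hT : 1 ≤ T) (lam : ℕ → ℝ) (w : ℕ → ℕ)
    (p : ℕ → ℝ) (hpos : ∀ t, 1 ≤ t → t ≤ T → 0 < lam t)
    (hmono : ∀ i j, 1 ≤ i → i < j → j ≤ T → lam i < lam j)
    (hfeas : Feasible T lam w p) :
    ∀ i j, 1 ≤ i → i ≤ T → 1 ≤ j → j ≤ T → (w i < w j ↔ p i < p j) := by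
  intro i j hi hiT hj hjT
  obtain ⟨-, hIC, -⟩ := hfeas
  constructor
  · intro hw
    have hne : j ≠ i := by rintro rfl; exact lt_irrefl _ hw
    linarith [hIC i j hi hiT hj hjT hne, utility_strictMono (hpos i hi hiT) hw]
  · intro hp
    have hne : i ≠ j := by rintro rfl; exact lt_irrefl _ hp
    refine (utility_strictMono (hpos j hj hjT)).lt_iff_lt.mp ?_
    linarith [hIC j i hj hjT hi hiT hne]
end

section
/- In any feasible contract, the net profit of a UAV operator is monotone in its type: for all indices i, j ∈ {1,…,T} with i < j, U(λ_i, w_i) − p_i ≤ U(λ_j, w_j) − p_j. -/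
theorem poissonTail_succ (x : ℝ) (k : ℕ) :
    poissonTail x (k + 1) =
      poissonTail x k - Real.exp (-x) * (x ^ k / (Nat.factorial k : ℝ)) := by
  simp only [poissonTail, Finset.sum_range_succ]
  ring

theorem poissonTail_monotoneOn (k : ℕ) :
    MonotoneOn (fun x => poissonTail x k) (Set.Ici 0) := by
  cases k with
  | zero => simpa [poissonTail] using monotoneOn_const
  | succ k =>
    refine monotoneOn_of_hasDerivWithinAt_nonneg (convex_Ici 0)
      (fun x _ => (hasDerivAt_poissonTail_succ k x).continuousAt.continuousWithinAt)
      (fun x _ => (hasDerivAt_poissonTail_succ k x).hasDerivWithinAt) fun x hx => ?_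
    have hx0 : 0 ≤ x := interior_subset hx
    positivity

theorem utility_mono {x y : ℝ} (hx : 0 ≤ x) (hxy : x ≤ y) (n : ℕ) :
    utility x n ≤ utility y n :=
  Finset.sum_le_sum fun k _ => poissonTail_monotoneOn k hx (hx.trans hxy) hxy

theorem feasible_profit_monotone_in_type (T : ℕ) (hT : 1 ≤ T) (lam : ℕ → ℝ) (w : ℕ → ℕ)
    (p : ℕ → ℝ) (hpos : ∀ t, 1 ≤ t → t ≤ T → 0 < lam t)
    (hmono : ∀ i j, 1 ≤ i → i < j → j ≤ T → lam i < lam j)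
    (hfeas : Feasible T lam w p) :
    ∀ i j, 1 ≤ i → i < j → j ≤ T →
      utility (lam i) (w i) - p i ≤ utility (lam j) (w j) - p j := by
  intro i j hi hij hj
  have hU := utility_mono (hpos i hi (by omega)).le (hmono i j hi hij hj).le (w i)
  have hIC := hfeas.2.1 j i (by omega) hj hi (by omega) (by omega)
  linarith
end

section
/- (Optimality of the optimal pricing strategy) Fix types 0 < λ_1 < ⋯ < λ_T, a feasible quality assignment w_1 ≤ w_2 ≤ ⋯ ≤ w_T, and positive weights N_1, …, N_T > 0. For every feasible contract (w_t, p_t) with the same qualities w_t, the total payment satisfies ∑_{t=1}^T N_t · p_t ≤ ∑_{t=1}^T N_t · p̂_t, where p̂ is the optimal pricing. -/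
theorem optimal_pricing_optimal (T : ℕ) (hT : 1 ≤ T) (lam : ℕ → ℝ) (w : ℕ → ℕ)
    (hpos : ∀ t, 1 ≤ t → t ≤ T → 0 < lam t)
    (hmono : ∀ i j, 1 ≤ i → i < j → j ≤ T → lam i < lam j)
    (hw : ∀ i j, 1 ≤ i → i ≤ j → j ≤ T → w i ≤ w j)
    (N : ℕ → ℝ) (hN : ∀ t, 1 ≤ t → t ≤ T → 0 < N t)
    (phat : ℕ → ℝ) (hphat1 : phat 1 = utility (lam 1) (w 1))
    (hphatk : ∀ k, 2 ≤ k → k ≤ T →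
      phat k = phat (k - 1) + utility (lam k) (w k) - utility (lam k) (w (k - 1)))
    (p : ℕ → ℝ) (hfeas : Feasible T lam w p) :
    ∑ t ∈ Finset.Icc 1 T, N t * p t ≤ ∑ t ∈ Finset.Icc 1 T, N t * phat t := by
  obtain ⟨-, hIC, hIR⟩ := hfeas
  have key : ∀ t, 1 ≤ t → t ≤ T → p t ≤ phat t := by
    intro t ht
    induction t, ht using Nat.le_induction with
    | base =>
      intro h1
      linarith [hIR 1 le_rfl h1]
    | succ t ht ih =>
      intro htT
      have hprev := ih (by omega)
      have hinc := hIC (t + 1) t (by omega) htT ht (by omega) (by omega)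
      have hhat := hphatk (t + 1) (by omega) htT
      rw [Nat.add_sub_cancel] at hhat
      linarith
  refine Finset.sum_le_sum fun t ht => ?_
  obtain ⟨h1, h2⟩ := Finset.mem_Icc.mp ht
  exact mul_le_mul_of_nonneg_left (key t h1 h2) (hN t h1 h2).le
end

section
/- (Uniqueness of the optimal pricing strategy) Fix types 0 < λ_1 < ⋯ < λ_T, a feasible quality assignment w_1 ≤ w_2 ≤ ⋯ ≤ w_T, and positive weights N_1, …, N_T > 0. If (w_t, p_t) is a feasible contract with the same qualities w_t and ∑_{t=1}^T N_t · p_t = ∑_{t=1}^T N_t · p̂_t, then p_t = p̂_t for every t, where p̂ is the optimal pricing. -/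
theorem optimal_pricing_unique (T : ℕ) (hT : 1 ≤ T) (lam : ℕ → ℝ) (w : ℕ → ℕ)
    (hpos : ∀ t, 1 ≤ t → t ≤ T → 0 < lam t)
    (hmono : ∀ i j, 1 ≤ i → i < j → j ≤ T → lam i < lam j)
    (hw : ∀ i j, 1 ≤ i → i ≤ j → j ≤ T → w i ≤ w j)
    (N : ℕ → ℝ) (hN : ∀ t, 1 ≤ t → t ≤ T → 0 < N t)
    (phat : ℕ → ℝ) (hphat1 : phat 1 = utility (lam 1) (w 1))
    (hphatk : ∀ k, 2 ≤ k → k ≤ T →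
      phat k = phat (k - 1) + utility (lam k) (w k) - utility (lam k) (w (k - 1)))
    (p : ℕ → ℝ) (hfeas : Feasible T lam w p)
    (heq : ∑ t ∈ Finset.Icc 1 T, N t * p t = ∑ t ∈ Finset.Icc 1 T, N t * phat t) :
    ∀ t, 1 ≤ t → t ≤ T → p t = phat t := by
  obtain ⟨-, hIC, hIR⟩ := hfeas
  have hle : ∀ t, 1 ≤ t → t ≤ T → p t ≤ phat t := by
    intro t ht
    induction t, ht using Nat.le_induction with
    | base =>
      intro h1
      have := hIR 1 le_rfl h1
      linarith
    | succ k hk ih =>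
      intro hkT
      have hIC' := hIC (k + 1) k (by omega) hkT hk (by omega) (by omega)
      have hrec := hphatk (k + 1) (by omega) hkT
      rw [Nat.add_sub_cancel] at hrec
      have := ih (by omega)
      linarith
  have hterm : ∀ t ∈ Finset.Icc 1 T, N t * p t ≤ N t * phat t := by
    intro t ht
    obtain ⟨h1, h2⟩ := Finset.mem_Icc.mp ht
    exact mul_le_mul_of_nonneg_left (hle t h1 h2) (hN t h1 h2).le
  intro t h1 h2
  have := (Finset.sum_eq_sum_iff_of_le hterm).mp heq t (Finset.mem_Icc.mpr ⟨h1, h2⟩)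
  exact mul_left_cancel₀ (hN t h1 h2).ne' this
end

section
/- (Revenue decomposition identity) Fix types 0 < λ_1 < ⋯ < λ_T, a feasible quality assignment w_1 ≤ w_2 ≤ ⋯ ≤ w_T, positive weights N_1, …, N_T > 0, and let p̂ be the optimal pricing. With C_t = ∑_{i=t}^T N_i and D_t = ∑_{i=t+1}^T N_i (so D_T = 0), the total payment satisfies ∑_{t=1}^T N_t · p̂_t = ∑_{t=1}^T C_t · U(λ_t, w_t) − ∑_{t=1}^{T−1} D_t · U(λ_{t+1}, w_t). -/
/-- Closed form of a sequence given by `p 1 = a 1` and increments `a k - b (k - 1)`. -/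
theorem eq_sum_sub_sum_of_recurrence (T : ℕ) (p a b : ℕ → ℝ) (h1 : p 1 = a 1)
    (hk : ∀ k, 2 ≤ k → k ≤ T → p k = p (k - 1) + a k - b (k - 1)) (t : ℕ) (ht1 : 1 ≤ t)
    (htT : t ≤ T) :
    p t = ∑ i ∈ Finset.Icc 1 t, a i - ∑ i ∈ Finset.Icc 1 (t - 1), b i := by
  induction t, ht1 using Nat.le_induction with
  | base => simp [h1]
  | succ n hn ih =>
    obtain ⟨m, rfl⟩ : ∃ m, n = m + 1 := ⟨n - 1, by omega⟩
    have hp := hk (m + 1 + 1) (by omega) htT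
    have ih' := ih (by omega)
    simp only [Nat.add_sub_cancel] at hp ih' ⊢
    rw [Finset.sum_Icc_succ_top (by omega) a, Finset.sum_Icc_succ_top (by omega) b, hp, ih']
    ring

theorem revenue_decomposition (T : ℕ) (hT : 1 ≤ T) (lam : ℕ → ℝ) (w : ℕ → ℕ)
    (hpos : ∀ t, 1 ≤ t → t ≤ T → 0 < lam t)
    (hmono : ∀ i j, 1 ≤ i → i < j → j ≤ T → lam i < lam j)
    (hw : ∀ i j, 1 ≤ i → i ≤ j → j ≤ T → w i ≤ w j)
    (N : ℕ → ℝ) (hN : ∀ t, 1 ≤ t → t ≤ T → 0 < N t)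
    (phat : ℕ → ℝ) (hphat1 : phat 1 = utility (lam 1) (w 1))
    (hphatk : ∀ k, 2 ≤ k → k ≤ T →
      phat k = phat (k - 1) + utility (lam k) (w k) - utility (lam k) (w (k - 1))) :
    ∑ t ∈ Finset.Icc 1 T, N t * phat t =
      ∑ t ∈ Finset.Icc 1 T, (∑ i ∈ Finset.Icc t T, N i) * utility (lam t) (w t)
        - ∑ t ∈ Finset.Icc 1 (T - 1),
            (∑ i ∈ Finset.Icc (t + 1) T, N i) * utility (lam (t + 1)) (w t) := by
  have hp : ∀ t ∈ Finset.Icc 1 T, N t * phat t =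
      ∑ i ∈ Finset.Icc 1 t, N t * utility (lam i) (w i)
        - ∑ i ∈ Finset.Icc 1 (t - 1), N t * utility (lam (i + 1)) (w i) := by
    intro t ht
    rw [Finset.mem_Icc] at ht
    rw [eq_sum_sub_sum_of_recurrence T phat (fun i => utility (lam i) (w i))
      (fun i => utility (lam (i + 1)) (w i)) hphat1 ?_ t ht.1 ht.2, mul_sub, Finset.mul_sum,
      Finset.mul_sum]
    intro k hk2 hkT
    simpa only [Nat.sub_add_cancel (by omega : 1 ≤ k)] using hphatk k hk2 hkT
  rw [Finset.sum_congr rfl hp, Finset.sum_sub_distrib]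
  simp only [Finset.sum_mul]
  congr 1 <;>
  · apply Finset.sum_comm'
    intro x y
    simp only [Finset.mem_Icc]
    omega
end

section
/- (Monotonicity of the MBS's optimal revenue in the UAV types) Let 0 < λ_1 < ⋯ < λ_T and 0 < λ'_1 < ⋯ < λ'_T be two sets of types with λ_t ≤ λ'_t for every t, and fix positive integer weights N_1, …, N_T, a total channel number M ≥ 1, and λ_BS > 0. Define R̂(λ) as the supremum, over all feasible contracts (w_t, p_t) for the types λ satisfying ∑_{t=1}^T N_t w_t ≤ M, of the revenue ∑_{t=1}^T N_t p_t − C(∑_{t=1}^T N_t w_t). This supremum is attained over a nonempty set bounded above, and R̂(λ) ≤ R̂(λ'). -/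
/-- Cost of the MBS manager for selling `m` of its `M` channels:
`C(m) = ∑_{k=M-m+1}^{M} P(X_BS ≥ k)`. -/
noncomputable def cost (lamBS : ℝ) (M m : ℕ) : ℝ :=
  ∑ k ∈ Finset.Icc (M - m + 1) M, poissonTail lamBS k

/-- The set of revenues achievable by the MBS manager via feasible contracts that
sell at most `M` channels in total. -/
noncomputable def revenueSet (T : ℕ) (lam : ℕ → ℝ) (N : ℕ → ℕ) (M : ℕ)
    (lamBS : ℝ) : Set ℝ :=
  {r | ∃ (w : ℕ → ℕ) (p : ℕ → ℝ), Feasible T lam w p ∧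
    (∑ t ∈ Finset.Icc 1 T, N t * w t) ≤ M ∧
    r = ∑ t ∈ Finset.Icc 1 T, (N t : ℝ) * p t
        - cost lamBS M (∑ t ∈ Finset.Icc 1 T, N t * w t)}

/-! ### Poisson tails and increasing differences of the utility -/

lemma hasDerivAt_exp_mul_sum (k : ℕ) (x : ℝ) :
    HasDerivAt (fun x : ℝ => Real.exp (-x) *
      ∑ i ∈ Finset.range (k + 1), x ^ i / (Nat.factorial i : ℝ))
      (-(Real.exp (-x) * (x ^ k / (Nat.factorial k : ℝ)))) x := by
  have he : HasDerivAt (fun x : ℝ => Real.exp (-x)) (-Real.exp (-x)) x := by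
    simpa using (hasDerivAt_neg x).exp
  induction k with
  | zero => simpa using he
  | succ k ih =>
    have h1 : HasDerivAt (fun x : ℝ => Real.exp (-x) *
        (x ^ (k + 1) / (Nat.factorial (k + 1) : ℝ)))
        (-Real.exp (-x) * (x ^ (k + 1) / (Nat.factorial (k + 1) : ℝ)) +
          Real.exp (-x) * (x ^ k / (Nat.factorial k : ℝ))) x := by
      have h2 := he.mul ((hasDerivAt_pow (k + 1) x).div_const (Nat.factorial (k + 1) : ℝ))
      refine h2.congr_deriv ?_
      have : (Nat.factorial k : ℝ) ≠ 0 := by positivity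
      rw [Nat.factorial_succ]
      push_cast
      have h3 : (k : ℝ) + 1 ≠ 0 := by positivity
      field_simp
    have h4 := ih.add h1
    refine (h4.congr_deriv (by ring)).congr_of_eventuallyEq (.of_forall fun y => ?_)
    simp only [Pi.add_apply, Finset.sum_range_succ _ (k + 1)]
    ring

lemma poissonTail_strictMonoOn (k : ℕ) :
    StrictMonoOn (fun x => poissonTail x (k + 1)) (Set.Ici 0) := by
  have hd : ∀ x : ℝ, HasDerivAt (fun x => poissonTail x (k + 1))
      (Real.exp (-x) * (x ^ k / (Nat.factorial k : ℝ))) x := fun x => by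
    simpa [poissonTail] using (hasDerivAt_exp_mul_sum k x).const_sub 1
  refine strictMonoOn_of_deriv_pos (convex_Ici 0)
    (fun x _ => (hd x).continuousAt.continuousWithinAt) fun x hx => ?_
  rw [interior_Ici] at hx
  have hx : 0 < x := hx
  rw [(hd x).deriv]
  positivity

lemma poissonTail_nonneg {l : ℝ} (hl : 0 ≤ l) (k : ℕ) : 0 ≤ poissonTail l (k + 1) := by
  have h := (poissonTail_strictMonoOn k).monotoneOn (Set.mem_Ici.2 le_rfl) (Set.mem_Ici.2 hl) hl
  have h0 : poissonTail 0 (k + 1) = 0 := by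
    simp [poissonTail, Finset.sum_range_succ']
  simpa [h0] using h

lemma utility_sub (l : ℝ) {a b : ℕ} (h : a ≤ b) :
    utility l b - utility l a = ∑ k ∈ Finset.Ico a b, poissonTail l (k + 1) := by
  have hu : ∀ w, utility l w = ∑ k ∈ Finset.range w, poissonTail l (k + 1) := fun w => by
    induction w with
    | zero => simp [utility]
    | succ n ih =>
      rw [Finset.sum_range_succ, ← ih, utility, Finset.sum_Icc_succ_top (by omega)]
      rfl
  rw [hu, hu, Finset.sum_Ico_eq_sub _ h]

lemma gain_nonneg {l : ℝ} (hl : 0 ≤ l) {a b : ℕ} (h : a ≤ b) :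
    0 ≤ utility l b - utility l a := by
  rw [utility_sub l h]
  exact Finset.sum_nonneg fun k _ => poissonTail_nonneg hl k

lemma gain_mono {l l' : ℝ} (hl : 0 ≤ l) (hl' : l ≤ l') {a b : ℕ} (h : a ≤ b) :
    utility l b - utility l a ≤ utility l' b - utility l' a := by
  rw [utility_sub l h, utility_sub l' h]
  exact Finset.sum_le_sum fun k _ => (poissonTail_strictMonoOn k).monotoneOn
    (Set.mem_Ici.2 hl) (Set.mem_Ici.2 (hl.trans hl')) hl'

lemma gain_strict {l l' : ℝ} (hl : 0 ≤ l) (hl' : l < l') {a b : ℕ} (h : a < b) :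
    utility l b - utility l a < utility l' b - utility l' a := by
  rw [utility_sub l h.le, utility_sub l' h.le]
  exact Finset.sum_lt_sum_of_nonempty (Finset.nonempty_Ico.2 h) fun k _ =>
    poissonTail_strictMonoOn k (Set.mem_Ici.2 hl) (Set.mem_Ici.2 (hl.trans hl'.le)) hl'

@[simp] lemma utility_zero (l : ℝ) : utility l 0 = 0 := by simp [utility]

/-! ### The largest feasible prices -/

/-- The largest feasible prices for qualities `w` that are monotone with `w 0 = 0`: type `j + 1`
pays `U(λ_{j+1}, w_{j+1}) - U(λ_{j+1}, w_j)` more than type `j`, where index `0` stands for the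
outside option (no channels, price `0`). -/
noncomputable def maxPrice (lam : ℕ → ℝ) (w : ℕ → ℕ) (t : ℕ) : ℝ :=
  ∑ j ∈ Finset.range t, (utility (lam (j + 1)) (w (j + 1)) - utility (lam (j + 1)) (w j))

lemma maxPrice_succ (lam : ℕ → ℝ) (w : ℕ → ℕ) (t : ℕ) : maxPrice lam w (t + 1) =
    maxPrice lam w t + (utility (lam (t + 1)) (w (t + 1)) - utility (lam (t + 1)) (w t)) := by
  rw [maxPrice, Finset.sum_range_succ, maxPrice]

section

variable {T : ℕ} {lam : ℕ → ℝ} {w : ℕ → ℕ}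

/-- IC of `maxPrice` against lower types; `s = 0` gives IR. -/
lemma maxPrice_sub_le (hpos : ∀ t, 1 ≤ t → t ≤ T → 0 < lam t)
    (hmono : ∀ i j, 1 ≤ i → i < j → j ≤ T → lam i < lam j)
    (hw : ∀ j < T, w j ≤ w (j + 1)) {r s t : ℕ} (hst : s ≤ t) (htr : t ≤ r) (hrT : r ≤ T) :
    maxPrice lam w t - maxPrice lam w s ≤ utility (lam r) (w t) - utility (lam r) (w s) := by
  induction t, hst using Nat.le_induction with
  | base => simp
  | succ t hst ih =>
    have h1 := ih (by omega)
    have hle : lam (t + 1) ≤ lam r := by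
      rcases htr.eq_or_lt with h | h
      · rw [h]
      · exact (hmono _ _ (by omega) h hrT).le
    have h2 := gain_mono (hpos (t + 1) (by omega) (by omega)).le hle (hw t (by omega))
    rw [maxPrice_succ]
    linarith

/-- IC of `maxPrice` against higher types. -/
lemma le_maxPrice_sub (hpos : ∀ t, 1 ≤ t → t ≤ T → 0 < lam t)
    (hmono : ∀ i j, 1 ≤ i → i < j → j ≤ T → lam i < lam j)
    (hw : ∀ j < T, w j ≤ w (j + 1)) {s t : ℕ} (hs : 1 ≤ s) (hst : s ≤ t) (htT : t ≤ T) :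
    utility (lam s) (w t) - utility (lam s) (w s) ≤ maxPrice lam w t - maxPrice lam w s := by
  induction t, hst using Nat.le_induction with
  | base => simp
  | succ t hst ih =>
    have h1 := ih (by omega)
    have h2 := gain_mono (hpos s hs (by omega)).le
      (hmono s (t + 1) hs (by omega) htT).le (hw t (by omega))
    rw [maxPrice_succ]
    linarith

lemma feasible_maxPrice (hpos : ∀ t, 1 ≤ t → t ≤ T → 0 < lam t)
    (hmono : ∀ i j, 1 ≤ i → i < j → j ≤ T → lam i < lam j)
    (hw : ∀ j < T, w j ≤ w (j + 1)) (hw0 : w 0 = 0) : Feasible T lam w (maxPrice lam w) := by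
  refine ⟨fun t _ ht => ?_, fun t s ht htT hs hsT _ => ?_, fun t _ htT => ?_⟩
  · refine Finset.sum_nonneg fun j hj => ?_
    rw [Finset.mem_range] at hj
    exact gain_nonneg (hpos _ (by omega) (by omega)).le (hw j (by omega))
  · rcases le_total s t with h | h
    · have := maxPrice_sub_le hpos hmono hw h le_rfl htT
      linarith
    · have := le_maxPrice_sub hpos hmono hw ht h hsT
      linarith
  · have := maxPrice_sub_le hpos hmono hw (Nat.zero_le t) le_rfl htT
    rw [hw0, utility_zero, show maxPrice lam w 0 = 0 by simp [maxPrice]] at this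
    linarith

/-- Adjacent IC in both directions contradicts strictly increasing differences unless `w` is
monotone. -/
lemma Feasible.quality_mono {p : ℕ → ℝ} (hf : Feasible T lam w p)
    (hpos : ∀ t, 1 ≤ t → t ≤ T → 0 < lam t)
    (hmono : ∀ i j, 1 ≤ i → i < j → j ≤ T → lam i < lam j)
    (hw0 : w 0 = 0) : ∀ j < T, w j ≤ w (j + 1) := by
  intro j hj
  rcases Nat.eq_zero_or_pos j with rfl | hj0
  · simp [hw0]
  by_contra! h
  have h1 := hf.2.1 j (j + 1) hj0 hj.le (by omega) hj (by omega)
  have h2 := hf.2.1 (j + 1) j (by omega) hj hj0 hj.le (by omega)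
  have h3 := gain_strict (hpos j hj0 hj.le).le (hmono j (j + 1) hj0 (by omega) hj) h
  linarith

lemma Feasible.price_le {p : ℕ → ℝ} {lam' : ℕ → ℝ} (hf : Feasible T lam w p)
    (hpos : ∀ t, 1 ≤ t → t ≤ T → 0 < lam t)
    (hmono : ∀ i j, 1 ≤ i → i < j → j ≤ T → lam i < lam j)
    (hle : ∀ t, 1 ≤ t → t ≤ T → lam t ≤ lam' t)
    (hw0 : w 0 = 0) {t : ℕ} (ht : 1 ≤ t) (htT : t ≤ T) : p t ≤ maxPrice lam' w t := by
  have hw := hf.quality_mono hpos hmono hw0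
  induction t, ht using Nat.le_induction with
  | base =>
    have h1 := hf.2.2 1 le_rfl htT
    have h2 := gain_mono (hpos 1 le_rfl htT).le (hle 1 le_rfl htT) (hw 0 htT)
    simp only [hw0, utility_zero, zero_add] at h2
    simp only [maxPrice, Finset.sum_range_one, hw0, utility_zero, zero_add]
    linarith
  | succ t ht ih =>
    have h0 := ih (by omega)
    have h1 := hf.2.1 (t + 1) t (by omega) htT ht (by omega) (by omega)
    have h2 := gain_mono (hpos (t + 1) (by omega) htT).le (hle (t + 1) (by omega) htT)
      (hw t htT)
    rw [maxPrice_succ]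
    linarith

end

/-! ### Reduction to finitely many contracts -/

/-- The quality vector on types `1, …, T` encoded by `f`, extended by `0` to all of `ℕ`. -/
def extend (T M : ℕ) (f : Fin (T + 1) → Fin (M + 1)) (t : ℕ) : ℕ :=
  if h : 1 ≤ t ∧ t ≤ T then f ⟨t, by omega⟩ else 0

/-- Every revenue for `lam` is dominated, for any larger types `lam'`, by the revenue of a contract
with prices `maxPrice` and qualities from a finite family independent of the types. -/
lemma exists_dominating {T : ℕ} {lam lam' : ℕ → ℝ}
    (hpos : ∀ t, 1 ≤ t → t ≤ T → 0 < lam t)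
    (hmono : ∀ i j, 1 ≤ i → i < j → j ≤ T → lam i < lam j)
    (hpos' : ∀ t, 1 ≤ t → t ≤ T → 0 < lam' t)
    (hmono' : ∀ i j, 1 ≤ i → i < j → j ≤ T → lam' i < lam' j)
    (hle : ∀ t, 1 ≤ t → t ≤ T → lam t ≤ lam' t)
    {N : ℕ → ℕ} (hN : ∀ t, 1 ≤ t → t ≤ T → 0 < N t) {M : ℕ} {lamBS : ℝ}
    {r : ℝ} (hr : r ∈ revenueSet T lam N M lamBS) :
    ∃ f : Fin (T + 1) → Fin (M + 1),
      (∑ t ∈ Finset.Icc 1 T, (N t : ℝ) * maxPrice lam' (extend T M f) t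
        - cost lamBS M (∑ t ∈ Finset.Icc 1 T, N t * extend T M f t))
        ∈ revenueSet T lam' N M lamBS ∧
      r ≤ ∑ t ∈ Finset.Icc 1 T, (N t : ℝ) * maxPrice lam' (extend T M f) t
        - cost lamBS M (∑ t ∈ Finset.Icc 1 T, N t * extend T M f t) := by
  obtain ⟨w, p, hf, hM, rfl⟩ := hr
  have hwM : ∀ t, 1 ≤ t → t ≤ T → w t ≤ M := fun t h1 h2 =>
    calc w t ≤ N t * w t := Nat.le_mul_of_pos_left _ (hN t h1 h2)
      _ ≤ ∑ t ∈ Finset.Icc 1 T, N t * w t :=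
        Finset.single_le_sum (f := fun t => N t * w t) (fun _ _ => Nat.zero_le _)
          (Finset.mem_Icc.2 ⟨h1, h2⟩)
      _ ≤ M := hM
  let f : Fin (T + 1) → Fin (M + 1) := fun t => Fin.ofNat (M + 1) (w t)
  have hfw : ∀ t, 1 ≤ t → t ≤ T → extend T M f t = w t := fun t h1 h2 => by
    have := hwM t h1 h2
    simp only [extend, h1, h2, and_self, dite_true, f, Fin.ofNat]
    exact Nat.mod_eq_of_lt (by omega)
  have hv0 : extend T M f 0 = 0 := by simp [extend]
  have hfv : Feasible T lam (extend T M f) p := by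
    refine ⟨hf.1, fun t s h1 h2 h3 h4 h5 => ?_, fun t h1 h2 => ?_⟩
    · rw [hfw t h1 h2, hfw s h3 h4]
      exact hf.2.1 t s h1 h2 h3 h4 h5
    · rw [hfw t h1 h2]
      exact hf.2.2 t h1 h2
  have hsum : ∑ t ∈ Finset.Icc 1 T, N t * extend T M f t = ∑ t ∈ Finset.Icc 1 T, N t * w t :=
    Finset.sum_congr rfl fun t ht => by
      rw [hfw t (Finset.mem_Icc.1 ht).1 (Finset.mem_Icc.1 ht).2]
  refine ⟨f, ⟨extend T M f, maxPrice lam' (extend T M f), feasible_maxPrice hpos' hmono'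
    (hfv.quality_mono hpos hmono hv0) hv0, hsum.trans_le hM, rfl⟩, ?_⟩
  rw [hsum]
  refine sub_le_sub_right (Finset.sum_le_sum fun t ht => ?_) _
  rw [Finset.mem_Icc] at ht
  exact mul_le_mul_of_nonneg_left (hfv.price_le hpos hmono hle hv0 ht.1 ht.2) (Nat.cast_nonneg _)

lemma revenueSet_nonempty (T : ℕ) (lam : ℕ → ℝ) (N : ℕ → ℕ) (M : ℕ) (lamBS : ℝ) :
    (revenueSet T lam N M lamBS).Nonempty :=
  ⟨_, 0, 0, by simp [Feasible], by simp, rfl⟩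

lemma exists_isGreatest {T : ℕ} {lam : ℕ → ℝ}
    (hpos : ∀ t, 1 ≤ t → t ≤ T → 0 < lam t)
    (hmono : ∀ i j, 1 ≤ i → i < j → j ≤ T → lam i < lam j)
    {N : ℕ → ℕ} (hN : ∀ t, 1 ≤ t → t ≤ T → 0 < N t) (M : ℕ) (lamBS : ℝ) :
    ∃ m, IsGreatest (revenueSet T lam N M lamBS) m := by
  let F : (Fin (T + 1) → Fin (M + 1)) → ℝ := fun f =>
    ∑ t ∈ Finset.Icc 1 T, (N t : ℝ) * maxPrice lam (extend T M f) t
        - cost lamBS M (∑ t ∈ Finset.Icc 1 T, N t * extend T M f t)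
  have hdom : ∀ r ∈ revenueSet T lam N M lamBS,
      ∃ f, F f ∈ revenueSet T lam N M lamBS ∧ r ≤ F f := fun r hr =>
    exists_dominating hpos hmono hpos hmono (fun _ _ _ => le_rfl) hN hr
  have hfin : (revenueSet T lam N M lamBS ∩ Set.range F).Finite :=
    (Set.finite_range F).inter_of_right _
  have hne : (revenueSet T lam N M lamBS ∩ Set.range F).Nonempty := by
    obtain ⟨r, hr⟩ := revenueSet_nonempty T lam N M lamBS
    obtain ⟨f, hf, -⟩ := hdom r hr
    exact ⟨F f, hf, f, rfl⟩
  obtain ⟨m, hm, hmax⟩ := Set.exists_max_image _ id hfin hne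
  refine ⟨m, hm.1, fun r hr => ?_⟩
  obtain ⟨f, hf, hrf⟩ := hdom r hr
  exact hrf.trans (hmax _ ⟨hf, f, rfl⟩)

theorem optimal_revenue_monotone_in_types (T : ℕ) (hT : 1 ≤ T)
    (lam lam' : ℕ → ℝ)
    (hpos : ∀ t, 1 ≤ t → t ≤ T → 0 < lam t)
    (hmono : ∀ i j, 1 ≤ i → i < j → j ≤ T → lam i < lam j)
    (hpos' : ∀ t, 1 ≤ t → t ≤ T → 0 < lam' t)
    (hmono' : ∀ i j, 1 ≤ i → i < j → j ≤ T → lam' i < lam' j)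
    (hle : ∀ t, 1 ≤ t → t ≤ T → lam t ≤ lam' t)
    (N : ℕ → ℕ) (hN : ∀ t, 1 ≤ t → t ≤ T → 0 < N t)
    (M : ℕ) (hM : 1 ≤ M) (lamBS : ℝ) (hBS : 0 < lamBS) :
    (revenueSet T lam N M lamBS).Nonempty ∧
    BddAbove (revenueSet T lam N M lamBS) ∧
    sSup (revenueSet T lam N M lamBS) ∈ revenueSet T lam N M lamBS ∧
    sSup (revenueSet T lam N M lamBS) ≤ sSup (revenueSet T lam' N M lamBS) := by
  obtain ⟨m, hm⟩ := exists_isGreatest hpos hmono hN M lamBS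
  obtain ⟨m', hm'⟩ := exists_isGreatest hpos' hmono' hN M lamBS
  refine ⟨⟨m, hm.1⟩, ⟨m, hm.2⟩, hm.csSup_mem, ?_⟩
  rw [hm.csSup_eq, hm'.csSup_eq]
  obtain ⟨f, hf, hle'⟩ := exists_dominating hpos hmono hpos' hmono' hle hN hm.1
  exact hle'.trans (hm'.2 hf)
end

section
/- The average UAV-to-user pathloss as a function of the elevation angle attains an interior global minimum: the function L is continuous on [0, π/2), satisfies L(φ) → +∞ as φ → (π/2)⁻, is bounded below by K + η_NLoS − η on [0, π/2), and there exists φ* ∈ (0, π/2) such that L(φ*) ≤ L(φ) for all φ ∈ [0, π/2), with the strict inequality L(φ*) < L(0). -/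
/-!
The logarithmic term `-20·log₁₀(cos φ)` is nonnegative on `[0, π/2)` and blows up at `π/2`, while
the logistic term stays in `[0, η]`; this gives the lower bound and the limit. Hence minimising over
`[0, π/2)` reduces to minimising over a compact interval. At `φ = 0` the logarithmic term has
derivative `0` and the term `-η / (1 + a·exp(…))` has negative derivative, so `L` takes values
below `L(0)` at some positive angle and the minimiser is interior.
-/

open Real

/-- Average UAV-to-user pathloss as a function of the elevation angle `φ` (in radians):
`L(φ) = K - 20·log₁₀(cos φ) + η_NLoS - η / (1 + a·exp(-b·((180/π)·φ - a)))`. -/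
noncomputable def pathloss (a b η ηNLoS K : ℝ) (φ : ℝ) : ℝ :=
  K - 20 * Real.logb 10 (Real.cos φ) + ηNLoS
    - η / (1 + a * Real.exp (-b * ((180 / Real.pi) * φ - a)))

open Filter Topology Set

lemma pathloss_cos_pos {φ : ℝ} (h : φ ∈ Ico 0 (π / 2)) : 0 < cos φ :=
  cos_pos_of_mem_Ioo ⟨by linarith [h.1, pi_pos], h.2⟩

lemma pathloss_denom_pos {a : ℝ} (ha : 0 < a) (t : ℝ) : 0 < 1 + a * exp t := by positivity

lemma pathloss_continuousOn (a b η ηNLoS K : ℝ) (ha : 0 < a) :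
    ContinuousOn (pathloss a b η ηNLoS K) (Ico 0 (π / 2)) := by
  intro φ h
  have hc := (pathloss_cos_pos h).ne'
  have hd := (pathloss_denom_pos ha (-b * ((180 / π) * φ - a))).ne'
  apply ContinuousAt.continuousWithinAt
  unfold pathloss logb
  fun_prop (disch := assumption)

/-- The logistic term costs at most `η`, at every angle. -/
lemma pathloss_ge_log (a b η ηNLoS K : ℝ) (ha : 0 < a) (hη : 0 < η) (φ : ℝ) :
    (K + ηNLoS - η) + (-20) * logb 10 (cos φ) ≤ pathloss a b η ηNLoS K φ := by
  have h : η / (1 + a * exp (-b * ((180 / π) * φ - a))) ≤ η :=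
    div_le_self hη.le (by linarith [mul_pos ha (exp_pos (-b * ((180 / π) * φ - a)))])
  unfold pathloss
  linarith

lemma pathloss_tendsto (a b η ηNLoS K : ℝ) (ha : 0 < a) (hη : 0 < η) :
    Tendsto (pathloss a b η ηNLoS K) (𝓝[<] (π / 2)) atTop := by
  refine tendsto_atTop_mono (pathloss_ge_log a b η ηNLoS K ha hη) ?_
  refine tendsto_atTop_add_const_left _ _ ?_
  refine Tendsto.const_mul_atBot_of_neg (by norm_num) ?_
  exact (tendsto_log_nhdsGT_zero.comp tendsto_cos_pi_div_two).atBot_div_const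
    (log_pos (by norm_num))

lemma pathloss_hasDerivAt_zero (a b η ηNLoS K : ℝ) (ha : 0 < a) :
    HasDerivAt (pathloss a b η ηNLoS K)
      (-(η * (a * exp (b * a) * (b * (180 / π))) / (1 + a * exp (b * a)) ^ 2)) 0 := by
  have hlog : HasDerivAt (fun φ => logb 10 (cos φ)) 0 0 := by
    simpa [logb] using ((hasDerivAt_cos 0).log (by simp)).div_const (log 10)
  have hlin : HasDerivAt (fun φ : ℝ => -b * ((180 / π) * φ - a)) (-b * ((180 / π) * 1)) 0 :=
    (((hasDerivAt_id (0 : ℝ)).const_mul (180 / π)).sub_const a).const_mul (-b)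
  have hden := (hlin.exp.const_mul a).const_add 1
  have hfrac := (hasDerivAt_const (0 : ℝ) η).fun_div hden (pathloss_denom_pos ha _).ne'
  have hall := (((hlog.const_mul 20).const_sub K).add_const ηNLoS).sub hfrac
  refine hall.congr_deriv ?_
  have he : -b * ((180 / π) * 0 - a) = b * a := by ring
  rw [he]
  ring

lemma pathloss_exists_lt_zero (a b η ηNLoS K : ℝ) (ha : 0 < a) (hb : 0 < b) (hη : 0 < η) :
    ∃ x ∈ Ioo 0 (π / 2), pathloss a b η ηNLoS K x < pathloss a b η ηNLoS K 0 := by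
  have hneg : -(η * (a * exp (b * a) * (b * (180 / π))) / (1 + a * exp (b * a)) ^ 2) < 0 :=
    neg_lt_zero.mpr (by positivity)
  have hs := (hasDerivAt_iff_tendsto_slope.mp
    (pathloss_hasDerivAt_zero a b η ηNLoS K ha)).eventually_lt_const hneg
  have hs' : ∀ᶠ x in 𝓝[>] (0 : ℝ), slope (pathloss a b η ηNLoS K) 0 x < 0 :=
    hs.filter_mono (nhdsWithin_mono _ fun x hx => ne_of_gt hx)
  obtain ⟨x, hx, hI⟩ := (hs'.and (Ioo_mem_nhdsGT (by positivity : (0 : ℝ) < π / 2))).exists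
  refine ⟨x, hI, ?_⟩
  rw [slope_def_field, sub_zero, div_lt_iff₀ hI.1] at hx
  linarith

theorem pathloss_interior_minimum (a b η ηNLoS K : ℝ)
    (ha : 0 < a) (hb : 0 < b) (hη : 0 < η) (hηη : η < ηNLoS) :
    ContinuousOn (pathloss a b η ηNLoS K) (Set.Ico 0 (Real.pi / 2)) ∧
    Filter.Tendsto (pathloss a b η ηNLoS K)
      (nhdsWithin (Real.pi / 2) (Set.Iio (Real.pi / 2))) Filter.atTop ∧
    (∀ φ ∈ Set.Ico 0 (Real.pi / 2), K + ηNLoS - η ≤ pathloss a b η ηNLoS K φ) ∧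
    ∃ φs ∈ Set.Ioo 0 (Real.pi / 2),
      (∀ φ ∈ Set.Ico 0 (Real.pi / 2),
        pathloss a b η ηNLoS K φs ≤ pathloss a b η ηNLoS K φ) ∧
      pathloss a b η ηNLoS K φs < pathloss a b η ηNLoS K 0 := by
  have hcont := pathloss_continuousOn a b η ηNLoS K ha
  have hlim := pathloss_tendsto a b η ηNLoS K ha hη
  refine ⟨hcont, hlim, fun φ h => ?_, ?_⟩
  · have hl : logb 10 (cos φ) ≤ 0 :=
      logb_nonpos (by norm_num) (pathloss_cos_pos h).le (cos_le_one φ)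
    linarith [pathloss_ge_log a b η ηNLoS K ha hη φ]
  obtain ⟨x, hx, hx0⟩ := pathloss_exists_lt_zero a b η ηNLoS K ha hb hη
  obtain ⟨c, hc, hcL⟩ := (mem_nhdsLT_iff_exists_Ioo_subset).mp
    (hlim.eventually_gt_atTop (pathloss a b η ηNLoS K 0))
  -- Beyond `max c x` the pathloss exceeds `L(0)`, and `[0, max c x]` contains `x`.
  have hd : max c x < π / 2 := max_lt hc hx.2
  have hxd : x ∈ Icc 0 (max c x) := ⟨hx.1.le, le_max_right _ _⟩
  obtain ⟨m, hm, hmin⟩ := isCompact_Icc.exists_isMinOn ⟨x, hxd⟩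
    (hcont.mono fun y hy => ⟨hy.1, hy.2.trans_lt hd⟩)
  have hm0 : pathloss a b η ηNLoS K m < pathloss a b η ηNLoS K 0 := (hmin hxd).trans_lt hx0
  refine ⟨m, ⟨hm.1.lt_of_ne ?_, hm.2.trans_lt hd⟩, fun φ h => ?_, hm0⟩
  · rintro rfl
    exact lt_irrefl _ hm0
  · rcases le_or_gt φ (max c x) with hφ | hφ
    · exact hmin ⟨h.1, hφ⟩
    · exact (hm0.trans (hcL ⟨(le_max_left c x).trans_lt hφ, h.2⟩)).le
end

section
/- The average UAV-to-user pathloss L is differentiable on (0, π/2), and for every φ ∈ (0, π/2) its derivative equals L'(φ) = (20/ln 10)·tan φ − (180/π)·a·b·η·exp(−b·((180/π)·φ − a)) / (1 + a·exp(−b·((180/π)·φ − a)))²; moreover L'(φ) → (right derivative) −(180/π)·a·b·η·exp(ab)/(1 + a·exp(ab))² < 0 as φ → 0⁺, so L is strictly decreasing in a neighborhood of φ = 0. -/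
/-!
The chain rule gives the derivative formula at every point where `cos φ > 0`, in particular on a
two-sided neighbourhood of `0`. The formula is continuous at `0`, where `tan` vanishes, so its
value there is both the right limit and negative. By continuity the derivative stays negative
near `0`, and the mean value theorem yields strict decrease on some `[0, ε)`.
-/

open Real

/-- The claimed derivative of the pathloss with respect to the elevation angle. -/
noncomputable def pathlossDeriv (a b η : ℝ) (φ : ℝ) : ℝ :=
  (20 / Real.log 10) * Real.tan φ
    - (180 / Real.pi) * a * b * η * Real.exp (-b * ((180 / Real.pi) * φ - a))
        / (1 + a * Real.exp (-b * ((180 / Real.pi) * φ - a))) ^ 2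

theorem pathloss_hasDerivAt_of_cos_pos (a b η ηNLoS K φ : ℝ) (ha : 0 < a)
    (hc : 0 < Real.cos φ) :
    HasDerivAt (pathloss a b η ηNLoS K) (pathlossDeriv a b η φ) φ := by
  have hD : 1 + a * Real.exp (-b * ((180 / Real.pi) * φ - a)) ≠ 0 := by positivity
  have hlog : Real.log 10 ≠ 0 := (Real.log_pos (by norm_num)).ne'
  have h1 : HasDerivAt (fun x => Real.logb 10 (Real.cos x))
      (-Real.sin φ / Real.cos φ / Real.log 10) φ :=
    ((Real.hasDerivAt_cos φ).log hc.ne').div_const _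
  have h2 : HasDerivAt (fun x : ℝ => -b * ((180 / Real.pi) * x - a))
      (-b * ((180 / Real.pi) * 1)) φ :=
    (((hasDerivAt_id φ).const_mul _).sub_const a).const_mul (-b)
  have h3 := (hasDerivAt_const φ η).fun_div ((h2.exp.const_mul a).const_add 1) hD
  have h4 := (((h1.const_mul 20).const_sub K).add_const ηNLoS).fun_sub h3
  refine h4.congr_deriv ?_
  rw [pathlossDeriv, Real.tan_eq_sin_div_cos]
  ring

theorem pathlossDeriv_zero (a b η : ℝ) :
    pathlossDeriv a b η 0 = -((180 / Real.pi) * a * b * η * Real.exp (a * b)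
      / (1 + a * Real.exp (a * b)) ^ 2) := by
  have h : -b * ((180 / Real.pi) * 0 - a) = a * b := by ring
  rw [pathlossDeriv, h, Real.tan_zero]
  ring

theorem pathlossDeriv_continuousAt_zero (a b η : ℝ) (ha : 0 < a) :
    ContinuousAt (pathlossDeriv a b η) 0 := by
  have hD : (1 + a * Real.exp (-b * ((180 / Real.pi) * 0 - a))) ^ 2 ≠ 0 := by positivity
  have htan : ContinuousAt Real.tan 0 := Real.continuousAt_tan.2 (by simp)
  refine (continuousAt_const.mul htan).sub (ContinuousAt.div ?_ ?_ hD)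
  all_goals fun_prop

theorem pathloss_hasDerivAt_and_decreasing_near_zero (a b η ηNLoS K : ℝ)
    (ha : 0 < a) (hb : 0 < b) (hη : 0 < η) (hηη : η < ηNLoS) :
    (∀ φ ∈ Set.Ioo 0 (Real.pi / 2),
      HasDerivAt (pathloss a b η ηNLoS K) (pathlossDeriv a b η φ) φ) ∧
    Filter.Tendsto (pathlossDeriv a b η) (nhdsWithin 0 (Set.Ioi 0))
      (nhds (-((180 / Real.pi) * a * b * η * Real.exp (a * b)
        / (1 + a * Real.exp (a * b)) ^ 2))) ∧
    -((180 / Real.pi) * a * b * η * Real.exp (a * b)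
        / (1 + a * Real.exp (a * b)) ^ 2) < 0 ∧
    ∃ ε > 0, StrictAntiOn (pathloss a b η ηNLoS K) (Set.Ico 0 ε) := by
  have hneg : -((180 / Real.pi) * a * b * η * Real.exp (a * b)
      / (1 + a * Real.exp (a * b)) ^ 2) < 0 := by
    have := Real.pi_pos
    rw [neg_lt_zero]
    positivity
  have hcont := pathlossDeriv_continuousAt_zero a b η ha
  have hzero := pathlossDeriv_zero a b η
  refine ⟨fun φ hφ => ?_, ?_, hneg, ?_⟩
  · exact pathloss_hasDerivAt_of_cos_pos a b η ηNLoS K φ ha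
      (Real.cos_pos_of_mem_Ioo ⟨by linarith [hφ.1, Real.pi_pos], hφ.2⟩)
  · rw [← hzero]
    exact hcont.tendsto.mono_left nhdsWithin_le_nhds
  · have hev : ∀ᶠ x in nhds (0 : ℝ), pathlossDeriv a b η x < 0 :=
      hcont.eventually_lt continuousAt_const (by rwa [hzero])
    have hcos : ∀ᶠ x in nhds (0 : ℝ), 0 < Real.cos x :=
      continuousAt_const.eventually_lt Real.continuous_cos.continuousAt (by simp)
    obtain ⟨ε, hε, h⟩ := Metric.eventually_nhds_iff.1 (hev.and hcos)
    have hball : ∀ x ∈ Set.Ico 0 ε, pathlossDeriv a b η x < 0 ∧ 0 < Real.cos x := by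
      intro x hx
      apply h
      rw [Real.dist_eq, sub_zero, abs_of_nonneg hx.1]
      exact hx.2
    have hder : ∀ x ∈ Set.Ico 0 ε,
        HasDerivAt (pathloss a b η ηNLoS K) (pathlossDeriv a b η x) x := fun x hx =>
      pathloss_hasDerivAt_of_cos_pos a b η ηNLoS K x ha (hball x hx).2
    refine ⟨ε, hε, strictAntiOn_of_deriv_neg (convex_Ico 0 ε)
      (fun x hx => (hder x hx).continuousAt.continuousWithinAt) fun x hx => ?_⟩
    rw [(hder x (interior_subset hx)).deriv]
    exact (hball x (interior_subset hx)).1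
end
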